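/- Let φ ∈ Δ be a unit spinor. The fundamental 2-form is computed spinorially: for all x, y ∈ ℝ^6, ω_φ(x,y) = −⟨x·y·φ, j(φ)⟩ = −⟨x·φ, y·(j(φ))⟩; in particular ω_φ is skew-symmetric. -/

import Mathlib

open RealInnerProductSpace

noncomputable section

/-- The spin representation space Δ = ℝ^8. -/
abbrev Δ : Type := EuclideanSpace ℝ (Fin 8)

/-- The standard skew endomorphism E_{ij} of ℝ^8: u_i ↦ u_j, u_j ↦ -u_i, others ↦ 0. -/
def E (i j : Fin 8) : Δ →ₗ[ℝ] Δ where
  toFun v := v i • EuclideanSpace.single j (1 : ℝ) - v j • EuclideanSpace.single i (1 : ℝ)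
  map_add' x y := by
    simp only [PiLp.add_apply, add_smul]
    module
  map_smul' c x := by
    simp only [PiLp.smul_apply, smul_eq_mul, RingHom.id_apply, mul_smul]
    module

/-- The seven Clifford endomorphisms e_1, …, e_7 (indexed 0,…,6). -/
def cliff : Fin 7 → (Δ →ₗ[ℝ] Δ) :=
  ![  E 0 7 + E 1 6 - E 2 5 - E 3 4,
    - E 0 6 + E 1 7 + E 2 4 - E 3 5,
    - E 0 5 + E 1 4 - E 2 7 + E 3 6,
    - E 0 4 - E 1 5 - E 2 6 - E 3 7,
    - E 0 2 - E 1 3 + E 4 6 + E 5 7,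
      E 0 3 - E 1 2 - E 4 7 + E 5 6,
      E 0 1 - E 2 3 - E 4 5 + E 6 7]

/-- j = e_1 ∘ e_2 ∘ e_3 ∘ e_4 ∘ e_5 ∘ e_6. -/
def jmap : Δ →ₗ[ℝ] Δ :=
  cliff 0 ∘ₗ cliff 1 ∘ₗ cliff 2 ∘ₗ cliff 3 ∘ₗ cliff 4 ∘ₗ cliff 5

/-- Clifford multiplication of a vector x ∈ ℝ^6 on a spinor. -/
def cm6 (x : EuclideanSpace ℝ (Fin 6)) (φ : Δ) : Δ :=
  ∑ i : Fin 6, x i • cliff i.castSucc φ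

/-- Clifford multiplication of a vector x ∈ ℝ^7 on a spinor. -/
def cm7 (x : EuclideanSpace ℝ (Fin 7)) (φ : Δ) : Δ :=
  ∑ i : Fin 7, x i • cliff i φ


/-- Standard basis vector of ℝ^6. -/
def v6 (i : Fin 6) : EuclideanSpace ℝ (Fin 6) := EuclideanSpace.single i (1 : ℝ)

/-- The 3-form ψ_φ(x,y,z) = -⟨x·y·z·φ, φ⟩ on ℝ^6. -/
def psiP (φ : Δ) (x y z : EuclideanSpace ℝ (Fin 6)) : ℝ :=
  -⟪cm6 x (cm6 y (cm6 z φ)), φ⟫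

/-- The 3-form ψ_φ⁻(x,y,z) = -⟨x·y·z·φ, j(φ)⟩ on ℝ^6. -/
def psiM (φ : Δ) (x y z : EuclideanSpace ℝ (Fin 6)) : ℝ :=
  -⟪cm6 x (cm6 y (cm6 z φ)), jmap φ⟫

/-- Action of a trilinear form on ℝ^6 on a spinor:
τ·χ := Σ_{i<j<k} τ(v_i,v_j,v_k) e_i(e_j(e_k(χ))). -/
def tact6 (τ : EuclideanSpace ℝ (Fin 6) → EuclideanSpace ℝ (Fin 6) →
    EuclideanSpace ℝ (Fin 6) → ℝ) (χ : Δ) : Δ :=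
  ∑ i : Fin 6, ∑ j : Fin 6, ∑ k : Fin 6,
    if i < j ∧ j < k then
      τ (v6 i) (v6 j) (v6 k) • cliff i.castSucc (cliff j.castSucc (cliff k.castSucc χ))
    else 0

/-- Action of a bilinear form on ℝ^6 on a spinor:
σ·χ := Σ_{i<j} σ(v_i,v_j) e_i(e_j(χ)). -/
def bact6 (σ : EuclideanSpace ℝ (Fin 6) → EuclideanSpace ℝ (Fin 6) → ℝ) (χ : Δ) : Δ :=
  ∑ i : Fin 6, ∑ j : Fin 6,
    if i < j then σ (v6 i) (v6 j) • cliff i.castSucc (cliff j.castSucc χ) else 0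

/-!
Let `e₁, …, eₙ` be skew-adjoint, pairwise anticommuting, with `eᵢ² = -1`, and let `j = e₁ ⋯ eₙ`.
Skew-adjointness and the Clifford relations give `⟪x·φ, y·φ⟫ = ⟪x, y⟫ ⟪φ, φ⟫`, hence
`⟪x, J y⟫ = ⟪x·φ, (J y)·φ⟫ = ⟪x·φ, j (y·φ)⟫` for a unit spinor `φ`. For `n` even, `j` anticommutes
with Clifford multiplication. Its adjoint is `(-1)ⁿ eₙ ⋯ e₁ = (-1)ⁿ (-1)^(n choose 2) j`, which is
`-j` when `n ≡ 2 mod 4`. The formulas for `ω_φ` follow by moving `x`, `y` and `j` across the inner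
product.

The seven endomorphisms of `ℝ⁸` permute the coordinates up to sign: with coordinates labelled by
`(ℤ/2)³`, each is a translation followed by sign changes, so that the Clifford relations
are finitely many identities between signs.
-/

/-- Two elements of a ring anticommute if exchanging them changes the sign of their product. -/
def Anticommute {R : Type*} [Ring R] (a b : R) : Prop :=
  a * b = -(b * a)

namespace Anticommute

variable {R : Type*} [Ring R] {a : R} {l : List R}

theorem mul_list_prod (h : ∀ b ∈ l, Anticommute a b) :
    a * l.prod = (-1) ^ l.length * (l.prod * a) := by
  induction l with
  | nil => simp
  | cons b l ih =>
    obtain ⟨hab, hl⟩ := List.forall_mem_cons.mp h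
    calc a * (b :: l).prod = -(b * (a * l.prod)) := by
          rw [List.prod_cons, ← mul_assoc, hab, neg_mul, mul_assoc]
      _ = (-1) ^ (b :: l).length * ((b :: l).prod * a) := by
          rw [ih hl, List.length_cons, List.prod_cons]
          obtain hs | hs := neg_one_pow_eq_or R l.length <;> simp [hs, pow_succ, mul_assoc]

theorem mul_list_prod_of_mem (hl : l.Pairwise Anticommute) (ha : a ∈ l) :
    a * l.prod = (-1) ^ (l.length + 1) * (l.prod * a) := by
  induction l with
  | nil => simp at ha
  | cons b l ih =>
    obtain ⟨hb, hl⟩ := List.pairwise_cons.mp hl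
    rw [List.length_cons, List.prod_cons]
    obtain rfl | ha := List.mem_cons.mp ha
    · have hmul : a * (a * l.prod) = (-1) ^ l.length * (a * (l.prod * a)) := by
        obtain hs | hs := neg_one_pow_eq_or R l.length <;> simp [mul_list_prod hb, hs]
      simp [hmul, pow_succ, mul_assoc]
    · rw [← mul_assoc, ← neg_eq_iff_eq_neg.mpr (hb a ha), neg_mul, mul_assoc, ih hl ha]
      obtain hs | hs := neg_one_pow_eq_or R l.length <;> simp [hs, pow_succ, mul_assoc]

theorem list_prod_reverse (hl : l.Pairwise Anticommute) :
    l.reverse.prod = (-1) ^ l.length.choose 2 * l.prod := by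
  induction l with
  | nil => simp
  | cons b l ih =>
    obtain ⟨hb, hl⟩ := List.pairwise_cons.mp hl
    calc (b :: l).reverse.prod = (-1) ^ l.length.choose 2 * (l.prod * b) := by
          simp [ih hl, mul_assoc]
      _ = (-1) ^ (b :: l).length.choose 2 * (b :: l).prod := by
          rw [List.length_cons, Nat.choose_succ_succ, Nat.choose_one_right, List.prod_cons,
            mul_list_prod hb, pow_add]
          obtain hs | hs := neg_one_pow_eq_or R l.length <;> simp [hs]

end Anticommute

theorem odd_add_choose_two {n : ℕ} (hn : n % 4 = 2) : Odd (n + n.choose 2) := by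
  obtain ⟨m, rfl⟩ : ∃ m, n = 4 * m + 2 := ⟨n / 4, by omega⟩
  have hchoose : (4 * m + 2).choose 2 = 2 * (4 * m ^ 2 + 3 * m) + 1 := by
    rw [Nat.choose_two_right]
    refine Nat.div_eq_of_eq_mul_left two_pos ?_
    rw [show 4 * m + 2 - 1 = 4 * m + 1 from rfl]
    ring
  rw [hchoose]
  exact ⟨4 * m ^ 2 + 5 * m + 1, by ring⟩

theorem isAdjointPair_list_prod_of_isSkewAdjoint {R M : Type*} [CommRing R] [AddCommGroup M]
    [Module R M] {B : LinearMap.BilinForm R M} {l : List (Module.End R M)}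
    (hl : ∀ a ∈ l, B.IsSkewAdjoint a) :
    LinearMap.IsAdjointPair B B l.prod ((-1) ^ l.length * l.reverse.prod : Module.End R M) := by
  induction l with
  | nil => exact fun _ _ ↦ by simp
  | cons a l ih =>
    obtain ⟨ha, hl⟩ := List.forall_mem_cons.mp hl
    have hprod := LinearMap.IsAdjointPair.mul (g := -a) ha (ih hl)
    have hrev : (-1) ^ l.length * l.reverse.prod * -a =
        (-1) ^ (a :: l).length * (a :: l).reverse.prod := by
      simp [pow_succ, mul_assoc]
    rwa [hrev] at hprod

section CliffordFamily

variable {ι V : Type*} [NormedAddCommGroup V] [InnerProductSpace ℝ V]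

/-- Skew-adjoint endomorphisms `e i` satisfying the Clifford relations
`e i * e k + e k * e i = -2 δ i k`: the action of an orthonormal basis of a Euclidean space on a
module over its Clifford algebra. -/
structure IsCliffordFamily (e : ι → Module.End ℝ V) : Prop where
  isSkewAdjoint : ∀ i, (innerₗ V).IsSkewAdjoint (e i)
  mul_self : ∀ i, e i * e i = -1
  anticommute : Pairwise fun i k ↦ Anticommute (e i) (e k)

/-- Clifford multiplication by the vector with coordinates `x`, where the standard basis acts
by `e`. -/
def cliffordMul [Fintype ι] (e : ι → Module.End ℝ V) (x : EuclideanSpace ℝ ι) : Module.End ℝ V :=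
  ∑ i, x i • e i

/-- The action of the volume element: the product of the `e i` in increasing order of the index. -/
def volumeElement {n : ℕ} (e : Fin n → Module.End ℝ V) : Module.End ℝ V :=
  (List.ofFn e).prod

namespace IsCliffordFamily

variable {e : ι → Module.End ℝ V}

theorem comp_injective {κ : Type*} (he : IsCliffordFamily e) {f : κ → ι}
    (hf : Function.Injective f) : IsCliffordFamily (e ∘ f) where
  isSkewAdjoint i := he.isSkewAdjoint (f i)
  mul_self i := he.mul_self (f i)
  anticommute _ _ hik := he.anticommute (hf.ne hik)

theorem inner_apply_left (he : IsCliffordFamily e) (i : ι) (a b : V) :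
    ⟪e i a, b⟫ = -⟪a, e i b⟫ := by
  simpa using he.isSkewAdjoint i a b

theorem inner_apply_apply [DecidableEq ι] (he : IsCliffordFamily e) (i k : ι) (a : V) :
    ⟪e i a, e k a⟫ = if i = k then ⟪a, a⟫ else 0 := by
  have hmul : ∀ i k, ⟪e i a, e k a⟫ = -⟪a, (e i * e k) a⟫ := fun i k ↦
    he.inner_apply_left i a (e k a)
  split_ifs with hik
  · subst hik
    rw [hmul, he.mul_self, LinearMap.neg_apply, inner_neg_right, neg_neg,
      Module.End.one_apply]
  · have hanti : ⟪e i a, e k a⟫ = -⟪e k a, e i a⟫ := by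
      rw [hmul, hmul, he.anticommute hik, LinearMap.neg_apply, inner_neg_right]
    rw [real_inner_comm (e i a)] at hanti
    linarith

section cliffordMul

variable [Fintype ι]

theorem inner_cliffordMul_left (he : IsCliffordFamily e) (x : EuclideanSpace ℝ ι) (a b : V) :
    ⟪cliffordMul e x a, b⟫ = -⟪a, cliffordMul e x b⟫ := by
  simp [cliffordMul, LinearMap.sum_apply, sum_inner, inner_sum, real_inner_smul_left,
    real_inner_smul_right, he.inner_apply_left]

theorem inner_cliffordMul_cliffordMul (he : IsCliffordFamily e) (x y : EuclideanSpace ℝ ι)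
    (a : V) : ⟪cliffordMul e x a, cliffordMul e y a⟫ = ⟪x, y⟫ * ⟪a, a⟫ := by
  classical
  simp only [cliffordMul, LinearMap.sum_apply, LinearMap.smul_apply, sum_inner, inner_sum,
    real_inner_smul_left, real_inner_smul_right, he.inner_apply_apply, mul_ite, mul_zero,
    Finset.sum_ite_eq', Finset.mem_univ, if_true, PiLp.inner_apply, Finset.sum_mul,
    RCLike.inner_apply, conj_trivial]
  exact Finset.sum_congr rfl fun i _ ↦ by ring

end cliffordMul

section volumeElement

variable {n : ℕ} {e : Fin n → Module.End ℝ V}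

theorem pairwise_ofFn (he : IsCliffordFamily e) : (List.ofFn e).Pairwise Anticommute :=
  List.pairwise_ofFn.mpr fun _ _ hik ↦ he.anticommute hik.ne

theorem anticommute_volumeElement (he : IsCliffordFamily e) (hn : Even n) (i : Fin n) :
    Anticommute (e i) (volumeElement e) := by
  have hmul := Anticommute.mul_list_prod_of_mem he.pairwise_ofFn
    (List.mem_ofFn.mpr ⟨i, rfl⟩ : e i ∈ List.ofFn e)
  rwa [List.length_ofFn, hn.add_one.neg_one_pow, neg_one_mul] at hmul

theorem volumeElement_cliffordMul (he : IsCliffordFamily e) (hn : Even n)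
    (x : EuclideanSpace ℝ (Fin n)) (a : V) :
    volumeElement e (cliffordMul e x a) = -cliffordMul e x (volumeElement e a) := by
  have hmul : ∀ i, volumeElement e (e i a) = -e i (volumeElement e a) := fun i ↦
    (neg_eq_iff_eq_neg.mpr (DFunLike.congr_fun (he.anticommute_volumeElement hn i) a)).symm
  simp [cliffordMul, LinearMap.sum_apply, hmul]

theorem isSkewAdjoint_volumeElement (he : IsCliffordFamily e) (hn : n % 4 = 2) :
    (innerₗ V).IsSkewAdjoint (volumeElement e) := by
  have hadj := isAdjointPair_list_prod_of_isSkewAdjoint (B := innerₗ V)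
    (List.forall_mem_ofFn_iff.mpr he.isSkewAdjoint)
  rwa [Anticommute.list_prod_reverse he.pairwise_ofFn, List.length_ofFn, ← mul_assoc, ← pow_add,
    (odd_add_choose_two hn).neg_one_pow, neg_one_mul] at hadj

end volumeElement

end IsCliffordFamily

theorem omega_spinorial_formula_general {n : ℕ} (hn : n % 4 = 2) {e : Fin n → Module.End ℝ V}
    (he : IsCliffordFamily e) {φ : V} (hφ : ⟪φ, φ⟫ = 1)
    {J : EuclideanSpace ℝ (Fin n) → EuclideanSpace ℝ (Fin n)}
    (hJ : ∀ x, volumeElement e (cliffordMul e x φ) = cliffordMul e (J x) φ)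
    (x y : EuclideanSpace ℝ (Fin n)) :
    ⟪x, J y⟫ = -⟪cliffordMul e x (cliffordMul e y φ), volumeElement e φ⟫ ∧
    ⟪x, J y⟫ = -⟪cliffordMul e x φ, cliffordMul e y (volumeElement e φ)⟫ ∧
    ⟪x, J y⟫ = -⟪y, J x⟫ := by
  have hn_even : Even n := Nat.even_iff.mpr (by omega)
  have hω : ∀ x y, ⟪x, J y⟫ = ⟪cliffordMul e x φ, volumeElement e (cliffordMul e y φ)⟫ := by
    intro x y
    rw [hJ, he.inner_cliffordMul_cliffordMul, hφ, mul_one]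
  have hω_volume : ∀ x y, ⟪x, J y⟫ = -⟪cliffordMul e x φ, cliffordMul e y (volumeElement e φ)⟫ := by
    intro x y
    rw [hω, he.volumeElement_cliffordMul hn_even, inner_neg_right]
  have hω_skew : ∀ x y, ⟪x, J y⟫ = -⟪y, J x⟫ := by
    intro x y
    have hvol := he.isSkewAdjoint_volumeElement hn (cliffordMul e y φ) (cliffordMul e x φ)
    rw [hω, hω, real_inner_comm]
    simpa using hvol
  refine ⟨?_, hω_volume x y, hω_skew x y⟩
  rw [he.inner_cliffordMul_left, hω_skew, hω_volume]

end CliffordFamily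

theorem fin_xor_xor_cancel_right {N n : ℕ} (hN : N = 2 ^ n) (k m : Fin N) : k ^^^ m ^^^ m = k := by
  have : NeZero N := ⟨by simp [hN]⟩
  rw [Fin.xor_assoc hN, Fin.xor_self, Fin.xor_zero]

theorem fin_xor_right_comm {N n : ℕ} (hN : N = 2 ^ n) (k l m : Fin N) :
    k ^^^ l ^^^ m = k ^^^ m ^^^ l := by
  rw [Fin.xor_assoc hN, Fin.xor_comm l, Fin.xor_assoc hN]

/-- The translation underlying the signed permutation `cliff i`: identifying `Fin 8` with `(ℤ/2)³`
through binary digits, the coordinate `k` of `cliff i v` is `±v (k ^^^ cliffShift i)`. -/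
def cliffShift : Fin 7 → Fin 8 :=
  ![7, 6, 5, 4, 2, 3, 1]

/-- The signs of the signed permutation `cliff i`: the coordinate `k` of `cliff i v` is
`cliffSign i k * v (k ^^^ cliffShift i)`. -/
def cliffSign : Fin 7 → Fin 8 → ℤ :=
  ![![-1, -1,  1,  1, -1, -1,  1,  1],
    ![ 1, -1, -1,  1,  1, -1, -1,  1],
    ![ 1, -1,  1, -1,  1, -1,  1, -1],
    ![ 1,  1,  1,  1, -1, -1, -1, -1],
    ![ 1,  1, -1, -1, -1, -1,  1,  1],
    ![-1,  1, -1,  1,  1, -1,  1, -1],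
    ![-1,  1,  1, -1,  1, -1, -1,  1]]

theorem E_apply (i j : Fin 8) (v : Δ) (k : Fin 8) :
    E i j v k = (if k = j then v i else 0) - if k = i then v j else 0 := by
  simp [E, PiLp.single_apply]

theorem cliff_apply (i : Fin 7) (v : Δ) (k : Fin 8) :
    cliff i v k = cliffSign i k * v (k ^^^ cliffShift i) := by
  fin_cases i <;> fin_cases k <;> simp [cliff, E_apply, cliffSign, cliffShift]

theorem cliffSign_xor_cliffShift (i : Fin 7) (k : Fin 8) :
    cliffSign i (k ^^^ cliffShift i) = -cliffSign i k := by
  revert i k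
  decide

theorem cliffSign_mul_self (i : Fin 7) (k : Fin 8) :
    cliffSign i k * cliffSign i (k ^^^ cliffShift i) = -1 := by
  revert i k
  decide

theorem cliffSign_mul_anticomm {i j : Fin 7} (hij : i ≠ j) (k : Fin 8) :
    cliffSign i k * cliffSign j (k ^^^ cliffShift i) =
      -(cliffSign j k * cliffSign i (k ^^^ cliffShift j)) := by
  revert i j k
  decide

theorem isSkewAdjoint_cliff (i : Fin 7) : (innerₗ Δ).IsSkewAdjoint (cliff i) := by
  intro a b
  simp only [innerₗ_apply_apply, Pi.neg_apply, inner_neg_right, PiLp.inner_apply,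
    RCLike.inner_apply, conj_trivial, cliff_apply]
  have hinv : Function.Involutive (· ^^^ cliffShift i) :=
    fun k ↦ fin_xor_xor_cancel_right (n := 3) rfl k _
  rw [← Finset.sum_neg_distrib]
  refine Fintype.sum_equiv hinv.toPerm _ _ fun k ↦ ?_
  rw [Function.Involutive.coe_toPerm, cliffSign_xor_cliffShift,
    fin_xor_xor_cancel_right (n := 3) rfl]
  push_cast
  ring

theorem cliff_mul_apply (i j : Fin 7) (v : Δ) (k : Fin 8) :
    (cliff i * cliff j) v k = (cliffSign i k * cliffSign j (k ^^^ cliffShift i) : ℤ) *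
      v (k ^^^ cliffShift i ^^^ cliffShift j) := by
  simp [cliff_apply, mul_assoc]

theorem isCliffordFamily_cliff : IsCliffordFamily cliff where
  isSkewAdjoint := isSkewAdjoint_cliff
  mul_self i := by
    ext v k
    rw [cliff_mul_apply, cliffSign_mul_self, fin_xor_xor_cancel_right (n := 3) rfl]
    simp
  anticommute i j hij := by
    ext v k
    rw [LinearMap.neg_apply, PiLp.neg_apply, cliff_mul_apply, cliff_mul_apply,
      cliffSign_mul_anticomm hij, fin_xor_right_comm (n := 3) rfl]
    simp

theorem cliffordMul_cliff_castSucc (x : EuclideanSpace ℝ (Fin 6)) (φ : Δ) :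
    cliffordMul (cliff ∘ Fin.castSucc) x φ = cm6 x φ := by
  simp [cliffordMul, cm6, LinearMap.sum_apply]

theorem volumeElement_cliff_castSucc : volumeElement (cliff ∘ Fin.castSucc) = jmap := by
  simp only [volumeElement, List.ofFn_succ, List.ofFn_zero, List.prod_cons, List.prod_nil, mul_one]
  rfl

/-- The fundamental 2-form is computed spinorially:
ω_φ(x,y) = -⟨x·y·φ, j(φ)⟩ = -⟨x·φ, y·(j(φ))⟩, and ω_φ is skew-symmetric.
Here J_φ is the unique linear map with j(x·φ) = (J_φ x)·φ, and ω_φ(x,y) = ⟨x, J_φ y⟩. -/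
theorem omega_spinorial_formula (φ : Δ) (hφ : ⟪φ, φ⟫ = 1)
    (J : EuclideanSpace ℝ (Fin 6) →ₗ[ℝ] EuclideanSpace ℝ (Fin 6))
    (hJ : ∀ x : EuclideanSpace ℝ (Fin 6), jmap (cm6 x φ) = cm6 (J x) φ) :
    ∀ x y : EuclideanSpace ℝ (Fin 6),
      ⟪x, J y⟫ = -⟪cm6 x (cm6 y φ), jmap φ⟫ ∧
      ⟪x, J y⟫ = -⟪cm6 x φ, cm6 y (jmap φ)⟫ ∧
      ⟪x, J y⟫ = -⟪y, J x⟫ := by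
  have he := isCliffordFamily_cliff.comp_injective (Fin.castSucc_injective 6)
  simpa only [cliffordMul_cliff_castSucc, volumeElement_cliff_castSucc] using
    omega_spinorial_formula_general rfl he hφ (J := J)
      (by simpa only [cliffordMul_cliff_castSucc, volumeElement_cliff_castSucc] using hJ)

end
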